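/- arXiv:1307.6841 — 4 statements merged into one kernel-verified Lean document; each statement's English description precedes it below -/
import Mathlib

section
/- (Hajnal-style coloring lemma, two factors) Under the stated definitions, the tensor product graph (V₀ × V₁, F₀ * F₁) is countably chromatic: there exists a coloring c : V₀ × V₁ → ω such that c(χ, η) ≠ c(χ', η') whenever {(χ, η), (χ', η')} ∈ F₀ * F₁, i.e., whenever {χ, χ'} ∈ F₀ and {η, η'} ∈ F₁. -/
/-!
The vertex sets `G₀` and `G₁` are disjoint, so in a pair `(χ, η)` the domains of `χ` and `η` differ.
The pair is colored by recording which coloring has the larger domain, together with the value of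
that coloring at the domain of the other one. If two adjacent pairs `(χ, η)`, `(χ', η')` agree on
the first datum, say `dom χ < dom η` and `dom χ' < dom η'`, then the larger of `η`, `η'` is defined
at both `dom χ` and `dom χ'` and takes there the two recorded values (`Frel.value_ne`). As
`{dom χ, dom χ'}` is an edge of `E₀`, for which the larger coloring is chromatic, these values
differ.
-/

open Set Cardinal

-- A partial coloring is coded as a pair `p = (β, χ)`, standing for the coloring
-- `χ ↾ β : β → ω`; only the values of `χ` below `β` are relevant.
/-- `q` extends `p` as a partial coloring: `dom p ≤ dom q` and they agree below `dom p`. -/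
def cext (p q : Ordinal.{0} × (Ordinal.{0} → ℕ)) : Prop :=
  p.1 ≤ q.1 ∧ ∀ x < p.1, q.2 x = p.2 x

/-- `p = (β, χ)` is a vertex of `V`: `β ∈ Gi` and `χ ↾ β` is `E`-chromatic. -/
def memV (Gi : Set Ordinal.{0}) (E : Ordinal.{0} → Ordinal.{0} → Prop)
    (p : Ordinal.{0} × (Ordinal.{0} → ℕ)) : Prop :=
  p.1 ∈ Gi ∧ ∀ x < p.1, ∀ y < p.1, E x y → p.2 x ≠ p.2 y

/-- The edge relation `F`: the domains form an `Ei`-edge and one coloring extends the other. -/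
def Frel (Ei : Ordinal.{0} → Ordinal.{0} → Prop)
    (p q : Ordinal.{0} × (Ordinal.{0} → ℕ)) : Prop :=
  Ei p.1 q.1 ∧ (cext p q ∨ cext q p)

/-- Comparable colorings `q`, `q'`, both chromatic for `E`, take different values at the two ends
of an `E`-edge `{a, a'}` with `a` in the domain of `q` and `a'` in that of `q'`: both values are
values of the larger coloring. -/
lemma Frel.value_ne {G : Set Ordinal.{0}} {E E' : Ordinal.{0} → Ordinal.{0} → Prop}
    {q q' : Ordinal.{0} × (Ordinal.{0} → ℕ)} {a a' : Ordinal.{0}}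
    (hF : Frel E' q q') (hq : memV G E q) (hq' : memV G E q')
    (hE : E a a') (ha : a < q.1) (ha' : a' < q'.1) : q.2 a ≠ q'.2 a' := by
  rcases hF.2 with h | h
  · rw [← h.2 a ha]
    exact hq'.2 a (ha.trans_le h.1) a' ha' hE
  · rw [← h.2 a' ha']
    exact hq.2 a ha a' (ha'.trans_le h.1) hE

/-- Hajnal-style coloring lemma (two factors): the tensor product
`(V₀ × V₁, F₀ * F₁)` is countably chromatic. -/
theorem tensor_product_countably_chromatic
    (lam : Cardinal.{0}) (hlam : ℵ₀ < lam)
    (G₀ G₁ : Set Ordinal.{0}) (E₀ E₁ : Ordinal.{0} → Ordinal.{0} → Prop)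
    (hG₀ : G₀ ⊆ Iio (Order.succ lam).ord) (hG₁ : G₁ ⊆ Iio (Order.succ lam).ord)
    (hdisj : Disjoint G₀ G₁)
    (hE₀sym : Symmetric E₀) (hE₀ : ∀ x y, E₀ x y → x ∈ G₀ ∧ y ∈ G₀ ∧ x ≠ y)
    (hE₁sym : Symmetric E₁) (hE₁ : ∀ x y, E₁ x y → x ∈ G₁ ∧ y ∈ G₁ ∧ x ≠ y) :
    ∃ c : (Ordinal.{0} × (Ordinal.{0} → ℕ)) → (Ordinal.{0} × (Ordinal.{0} → ℕ)) → ℕ,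
      ∀ p p' q q',
        memV G₀ E₁ p → memV G₀ E₁ p' → memV G₁ E₀ q → memV G₁ E₀ q' →
        Frel E₀ p p' → Frel E₁ q q' → c p q ≠ c p' q' := by
  classical
  -- The parity of the color records which of the two domains is larger.
  refine ⟨fun p q => if p.1 < q.1 then 2 * q.2 p.1 else 2 * p.2 q.1 + 1, ?_⟩
  intro p p' q q' hp hp' hq hq' hF₀ hF₁
  have hne : p.1 ≠ q.1 := fun h => disjoint_left.1 hdisj hp.1 (h ▸ hq.1)
  have hne' : p'.1 ≠ q'.1 := fun h => disjoint_left.1 hdisj hp'.1 (h ▸ hq'.1)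
  dsimp only
  split_ifs with h h' h'
  · have := hF₁.value_ne hq hq' hF₀.1 h h'
    omega
  · omega
  · omega
  · have := hF₀.value_ne hp hp' hF₁.1 (lt_of_le_of_ne (not_lt.1 h) hne.symm)
      (lt_of_le_of_ne (not_lt.1 h') hne'.symm)
    omega
end

section
/- (Hajnal-style coloring lemma, n+1 factors) Under the stated definitions, the tensor product graph (V₀ × ⋯ × V_n, F₀ * ⋯ * F_n) is countably chromatic: there exists a coloring c of V₀ × ⋯ × V_n into a countable set (the paper uses c : V₀ × ⋯ × V_n → [ω³]^{<ω}) such that c(χ₀, …, χ_n) ≠ c(χ₀', …, χ_n') whenever {χ_i, χ_i'} ∈ F_i for every i < n+1. -/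
/-!
Write `β i` for the domain of the `i`-th coordinate of a vertex of the product. If `β i` is least
among all the domains and `β i ∈ G j`, then `β i < β j` strictly: `β j` lies in some `G k` with
`k ≠ j`, so `β i = β j` would contradict disjointness. Hence the `j`-th coloring is defined at
`β i`, and the vertex is colored by `i`, `j` and that value
(`exists_dom_lt`).

If adjacent vertices `p`, `q` received the same color, then `i` and `j` agree, and the domains of
`p i` and `q i` form an edge of `E j`, the only graph living on `G j`. Both lie below the larger of
the domains of `p j` and `q j`, and the coloring with that domain extends the other one and is
`E j`-chromatic, so the recorded values differ.
-/

open Set Cardinal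

/-- `p = (β, χ)` is a vertex of `V i`: `β ∈ ⋃ {G j : j ≠ i}` and `χ ↾ β` is `E i`-chromatic. -/
def memV3 {n : ℕ} (G : Fin (n + 1) → Set Ordinal.{0})
    (E : Fin (n + 1) → Ordinal.{0} → Ordinal.{0} → Prop) (i : Fin (n + 1))
    (p : Ordinal.{0} × (Ordinal.{0} → ℕ)) : Prop :=
  (∃ j, j ≠ i ∧ p.1 ∈ G j) ∧ ∀ x < p.1, ∀ y < p.1, E i x y → p.2 x ≠ p.2 y

/-- The edge relation `F i`: the domains form an edge of `⋃ j, E j` and one coloring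
extends the other. -/
def Frel3 {n : ℕ} (E : Fin (n + 1) → Ordinal.{0} → Ordinal.{0} → Prop)
    (p q : Ordinal.{0} × (Ordinal.{0} → ℕ)) : Prop :=
  (∃ j, E j p.1 q.1) ∧ (cext p q ∨ cext q p)

/-- Every vertex of the product has a coordinate `j` which is defined at the domain of some
coordinate `i`, where that domain belongs to `G j`. -/
lemma exists_dom_lt {n : ℕ} {G : Fin (n + 1) → Set Ordinal.{0}}
    {E : Fin (n + 1) → Ordinal.{0} → Ordinal.{0} → Prop}
    (hdisj : ∀ j j', j ≠ j' → Disjoint (G j) (G j'))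
    {p : Fin (n + 1) → Ordinal.{0} × (Ordinal.{0} → ℕ)} (hp : ∀ i, memV3 G E i (p i)) :
    ∃ ij : Fin (n + 1) × Fin (n + 1), (p ij.1).1 ∈ G ij.2 ∧ (p ij.1).1 < (p ij.2).1 := by
  obtain ⟨i, hi⟩ := Finite.exists_min fun i => (p i).1
  obtain ⟨j, -, hj⟩ := (hp i).1
  obtain ⟨k, hkj, hk⟩ := (hp j).1
  refine ⟨(i, j), hj, lt_of_le_of_ne (hi j) fun h => ?_⟩
  exact Set.disjoint_left.1 (hdisj k j hkj) hk (h ▸ hj)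

/-- Hajnal-style coloring lemma (`n + 1` factors): the tensor product of the graphs
`(V i, F i)` for `i < n + 1` is countably chromatic. -/
theorem tensor_product_countably_chromatic_many_factors
    (lam : Cardinal.{0}) (hlam : ℵ₀ < lam) (n : ℕ) (hn : 0 < n)
    (G : Fin (n + 1) → Set Ordinal.{0})
    (E : Fin (n + 1) → Ordinal.{0} → Ordinal.{0} → Prop)
    (hG : ∀ j, G j ⊆ Iio (Order.succ lam).ord)
    (hdisj : ∀ j j', j ≠ j' → Disjoint (G j) (G j'))
    (hEsym : ∀ j, Symmetric (E j))
    (hE : ∀ j x y, E j x y → x ∈ G j ∧ y ∈ G j ∧ x ≠ y) :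
    ∃ c : (Fin (n + 1) → Ordinal.{0} × (Ordinal.{0} → ℕ)) → ℕ,
      ∀ p q : Fin (n + 1) → Ordinal.{0} × (Ordinal.{0} → ℕ),
        (∀ i, memV3 G E i (p i)) → (∀ i, memV3 G E i (q i)) →
        (∀ i, Frel3 E (p i) (q i)) → c p ≠ c q := by
  classical
  have hex : ∀ p : Fin (n + 1) → Ordinal.{0} × (Ordinal.{0} → ℕ),
      ∃ ij : Fin (n + 1) × Fin (n + 1), (∀ i, memV3 G E i (p i)) →
        (p ij.1).1 ∈ G ij.2 ∧ (p ij.1).1 < (p ij.2).1 := fun p => by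
    by_cases hp : ∀ i, memV3 G E i (p i)
    · obtain ⟨ij, h⟩ := exists_dom_lt hdisj hp
      exact ⟨ij, fun _ => h⟩
    · exact ⟨(0, 0), fun h => absurd h hp⟩
  choose s hs using hex
  refine ⟨fun p => Encodable.encode (s p, (p (s p).2).2 (p (s p).1).1), ?_⟩
  intro p q hp hq hpq hc
  obtain ⟨hss, hval⟩ := Prod.mk.inj (Encodable.encode_injective hc)
  obtain ⟨hpG, hplt⟩ := hs p hp
  obtain ⟨hqG, hqlt⟩ := hs q hq
  rw [← hss] at hqG hqlt hval
  generalize s p = ij at *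
  obtain ⟨i, j⟩ := ij
  obtain ⟨⟨k, hk⟩, -⟩ := hpq i
  obtain rfl : k = j := by
    by_contra hne
    exact Set.disjoint_left.1 (hdisj k j hne) (hE k _ _ hk).1 hpG
  rcases (hpq k).2 with ⟨hle, hagree⟩ | ⟨hle, hagree⟩
  · exact (hq k).2 _ (hplt.trans_le hle) _ hqlt hk ((hagree _ hplt).trans hval)
  · exact (hp k).2 _ hplt _ (hqlt.trans_le hle) hk (hval.trans (hagree _ hqlt).symm)
end

section
/- (Nonemptiness of the Hajnal color) Let n be a positive integer, and let ⟨G_j : j < n+1⟩ be pairwise disjoint sets of ordinals. Suppose β₀, …, β_n are ordinals such that for every i ≤ n, β_i ∈ ⋃{G_j : j ≤ n, j ≠ i}. Then there exist i, j ≤ n such that β_j ∈ G_i and β_j < β_i. -/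
open Set Cardinal

/-- Nonemptiness of the Hajnal color: if `⟨G j : j < n + 1⟩` are pairwise disjoint sets
of ordinals and each `β i` lies in some `G j` with `j ≠ i`, then some `β j` lies in `G i`
with `β j < β i`. -/
theorem exists_mem_lt_of_pairwise_disjoint
    (n : ℕ) (hn : 0 < n) (G : Fin (n + 1) → Set Ordinal.{0})
    (hdisj : ∀ i j, i ≠ j → Disjoint (G i) (G j))
    (β : Fin (n + 1) → Ordinal.{0})
    (hβ : ∀ i, ∃ j, j ≠ i ∧ β i ∈ G j) :
    ∃ i j, β j ∈ G i ∧ β j < β i := by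
  choose f hf hmem using hβ
  -- For `β k` least among the `β`s, equality `β (f k) = β k` would put this ordinal in both
  -- `G (f k)` and `G (f (f k))`, which are disjoint since `f (f k) ≠ f k`.
  obtain ⟨k, hk⟩ := Finite.exists_min β
  refine ⟨f k, k, hmem k, lt_of_le_of_ne (hk (f k)) fun h => ?_⟩
  exact Set.disjoint_left.mp (hdisj (f (f k)) (f k) (hf (f k))) (hmem (f k)) (h ▸ hmem k)
end

section
/- (Derived coloring lemma, n factors) Under the stated definitions, let k < n+1 and I := {i < n+1 : i ≠ k}. Suppose χ* : λ⁺ → ω satisfies, for every i ∈ I, χ*(x) ≠ χ*(y) whenever {x, y} ∈ E_i; and suppose c : ∏_{i∈I} V_i → λ satisfies c(⟨χ_i⟩_{i∈I}) ≠ c(⟨χ_i'⟩_{i∈I}) whenever {χ_i, χ_i'} ∈ F_i for every i ∈ I. Then for every β ∈ G_k and every i ∈ I the restriction χ*↾β belongs to V_i, and the coloring c* : G_k → λ defined by c*(β) := c(⟨χ*↾β : i ∈ I⟩) is E_k-chromatic; in particular chr(G_k, E_k) ≤ λ. -/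
/-! Restrictions of one function `χ*` to two ordinals are always comparable under extension.
Hence for an edge `{α, δ}` of `E k`, the constant tuples at `χ* ↾ α` and `χ* ↾ δ` are joined by an
`F i`-edge in every coordinate `i ≠ k`, so a chromatic coloring of the product separates them. -/

open Set Cardinal

/-- Derived coloring lemma (`n` factors): from a coloring `χ* : λ⁺ → ω` that is
`E i`-chromatic for every `i ≠ k`, and a chromatic coloring `c` of the product of the
graphs `(V i, F i)` for `i ≠ k` into `λ` colors, the coloring
`c* (β) := c (⟨χ* ↾ β : i ≠ k⟩)` is an `E k`-chromatic coloring of `G k` into `λ` colors;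
in particular `chr (G k, E k) ≤ λ`. -/
theorem derived_coloring_many_factors
    (lam : Cardinal.{0}) (hlam : ℵ₀ < lam) (n : ℕ) (hn : 0 < n)
    (G : Fin (n + 1) → Set Ordinal.{0})
    (E : Fin (n + 1) → Ordinal.{0} → Ordinal.{0} → Prop)
    (hG : ∀ j, G j ⊆ Iio (Order.succ lam).ord)
    (hdisj : ∀ j j', j ≠ j' → Disjoint (G j) (G j'))
    (hEsym : ∀ j, Symmetric (E j))
    (hE : ∀ j x y, E j x y → x ∈ G j ∧ y ∈ G j ∧ x ≠ y)
    (k : Fin (n + 1))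
    (χs : Ordinal.{0} → ℕ) (hχs : ∀ i, i ≠ k → ∀ x y, E i x y → χs x ≠ χs y)
    (c : (Fin (n + 1) → Ordinal.{0} × (Ordinal.{0} → ℕ)) → Ordinal.{0})
    (hclt : ∀ p, (∀ i, i ≠ k → memV3 G E i (p i)) → c p < lam.ord)
    (hc : ∀ p q, (∀ i, i ≠ k → memV3 G E i (p i)) → (∀ i, i ≠ k → memV3 G E i (q i)) →
      (∀ i, i ≠ k → Frel3 E (p i) (q i)) → c p ≠ c q) :
    (∀ β ∈ G k, ∀ i, i ≠ k → memV3 G E i (β, χs)) ∧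
    (∀ α δ, E k α δ → c (fun _ => (α, χs)) ≠ c (fun _ => (δ, χs))) ∧
    (∃ cs : Ordinal.{0} → Ordinal.{0},
      (∀ β ∈ G k, cs β < lam.ord) ∧ ∀ α δ, E k α δ → cs α ≠ cs δ) := by
  have hV : ∀ β ∈ G k, ∀ i, i ≠ k → memV3 G E i (β, χs) := fun β hβ i hi =>
    ⟨⟨k, hi.symm, hβ⟩, fun x _ y _ h => hχs i hi x y h⟩
  have hne : ∀ α δ, E k α δ → c (fun _ => (α, χs)) ≠ c (fun _ => (δ, χs)) := by
    intro α δ h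
    obtain ⟨hα, hδ, -⟩ := hE k α δ h
    -- Restrictions of the single function `χs` are comparable, so the edge `{α, δ}` of `E k`
    -- induces an `F i`-edge in every coordinate.
    have hF : Frel3 E (α, χs) (δ, χs) :=
      ⟨⟨k, h⟩, (le_total α δ).imp (fun hle => ⟨hle, fun _ _ => rfl⟩)
        (fun hle => ⟨hle, fun _ _ => rfl⟩)⟩
    exact hc _ _ (hV α hα) (hV δ hδ) fun _ _ => hF
  exact ⟨hV, hne, fun β => c (fun _ => (β, χs)), fun β hβ => hclt _ (hV β hβ), hne⟩
end
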